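/- Let T : M → M be a monotone distributional transform. Then T commutes with the set 𝒰 of all utility transforms (i.e., 𝒰 ∘ T = T ∘ 𝒰 as sets of maps) if and only if T = T_d ∘ T^u for some distortion function d ∈ F_D and some strictly increasing, continuous, surjective u : ℝ → ℝ. -/

import Mathlib

/-!
A utility transform is handled through the order-theoretic relation `IsPush`, which determines
`utilityT u F` uniquely for a utility function `u` (`IsPush.eq_utilityT`) and makes functoriality
(`utilityT_comp`), monotonicity and the commutation of distortions with utility transforms
(`isPush_distortT`) short arguments by squeezing.

If `T = T_d ∘ T^v` with `v` an increasing bijection, then `T ∘ T^u = T^{u'} ∘ T` as soon as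
`u' ∘ v = v ∘ u`, and this equation can be solved for `u'` given `u` and for `u` given `u'`.

Conversely, commutation with the constant utilities shows that `T` maps point masses to point masses
through an increasing surjection `v`; it is injective because affine utilities move any two points to
points separated by `v`. Evaluating on point masses forces `u' = v ∘ u ∘ v⁻¹`
(`exists_orderIso`), so `S = T ∘ T^{v⁻¹}` commutes with each utility transform and fixes point
masses. Such an `S` is a distortion (`eq_distortT`): for `x < y`, a utility rising from `0` at `x`
to `1` at `y` compares `F` with two-point distributions and yields `S F x ≤ d (F y)` and
`d (F x) ≤ S F y`, where `d p` is the value at `1/2` of the image of the two-point distribution with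
level `p`. Right-continuity of `S F` concludes.
-/

open MeasureTheory Filter Topology Set

noncomputable section

/-- The set of cdfs of compactly supported probability distributions on ℝ:
increasing, right-continuous, equal to `0` for all sufficiently small `x` and
equal to `1` for all sufficiently large `x`. -/
def mSet : Set (ℝ → ℝ) :=
  {F | Monotone F ∧ (∀ x, ContinuousWithinAt F (Set.Ici x) x) ∧
    (∃ a, ∀ x ≤ a, F x = 0) ∧ (∃ b, ∀ x, b ≤ x → F x = 1)}

/-- The set of cdfs of all probability distributions on ℝ: increasing,
right-continuous, with limit `0` at `-∞` and limit `1` at `+∞`. -/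
def m0Set : Set (ℝ → ℝ) :=
  {F | Monotone F ∧ (∀ x, ContinuousWithinAt F (Set.Ici x) x) ∧
    Tendsto F atBot (𝓝 0) ∧ Tendsto F atTop (𝓝 1)}

/-- A utility function: increasing (non-strict) and continuous. -/
def IsUF (u : ℝ → ℝ) : Prop := Monotone u ∧ Continuous u

/-- An increasing and left-continuous function on ℝ. -/
def IsLeftCtsIncr (u : ℝ → ℝ) : Prop :=
  Monotone u ∧ ∀ x, ContinuousWithinAt u (Set.Iic x) x

/-- A distortion function: an increasing function `d : [0,1] → [0,1]` with
`d 0 = 0` and `d 1 = 1` (values outside `[0,1]` are irrelevant). -/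
def IsDF (d : ℝ → ℝ) : Prop :=
  MonotoneOn d (Set.Icc 0 1) ∧ d 0 = 0 ∧ d 1 = 1

/-- Right-continuity of a distortion function on `[0,1)`. -/
def DFRightCts (d : ℝ → ℝ) : Prop :=
  ∀ x ∈ Set.Ico (0:ℝ) 1, ContinuousWithinAt d (Set.Ioi x) x

/-- A distortion function with moreover `d(0+) = 0` and `d(1-) = 1`. -/
def IsDFhat (d : ℝ → ℝ) : Prop :=
  IsDF d ∧ Tendsto d (𝓝[>] (0:ℝ)) (𝓝 0) ∧ Tendsto d (𝓝[<] (1:ℝ)) (𝓝 1)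

/-- The probability distortion generated by `d`:  `T_d F x = (d ∘ F)(x+)`,
the right limit of `d ∘ F` at `x`. -/
noncomputable def distortT (d F : ℝ → ℝ) : ℝ → ℝ :=
  fun x => Function.rightLim (d ∘ F) x

/-- The utility transform `T^u`: it maps a cdf `F` to the cdf of the
pushforward under `u` of the probability measure with cdf `F`. -/
noncomputable def utilityT (u F : ℝ → ℝ) : ℝ → ℝ := by
  classical
  exact
    if h : Monotone F ∧ ∀ x, ContinuousWithinAt F (Set.Ici x) x then
      fun x => ((StieltjesFunction.measure ⟨F, h.1, h.2⟩).map u (Set.Iic x)).toReal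
    else F

/-- Left quantile `F_L^{-1}(p) = inf {x | F x ≥ p}`. -/
noncomputable def leftQ (F : ℝ → ℝ) (p : ℝ) : ℝ := sInf {x | p ≤ F x}

/-- Right quantile `F_R^{-1}(p) = inf {x | F x > p}`. -/
noncomputable def rightQ (F : ℝ → ℝ) (p : ℝ) : ℝ := sInf {x | p < F x}

/-! ### Cdfs and pushforwards -/

lemma mSet_nonneg {F : ℝ → ℝ} (hF : F ∈ mSet) (x : ℝ) : 0 ≤ F x := by
  obtain ⟨hm, -, ⟨a, ha⟩, -⟩ := hF
  rw [← ha (min a x) (min_le_left _ _)]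
  exact hm (min_le_right _ _)

lemma mSet_le_one {F : ℝ → ℝ} (hF : F ∈ mSet) (x : ℝ) : F x ≤ 1 := by
  obtain ⟨hm, -, -, ⟨b, hb⟩⟩ := hF
  rw [← hb (max b x) (le_max_left _ _)]
  exact hm (le_max_right _ _)

/-- A measure-free description of "`G` is the cdf of `u(X)` when `X` has cdf `F`": each `{u ≤ x}` is
a closed lower set, so `G x` is squeezed between the values of `F` on the two sides of its
endpoint. -/
def IsPush (u F G : ℝ → ℝ) : Prop :=
  ∀ a x, (u a ≤ x → F a ≤ G x) ∧ (x < u a → G x ≤ F a)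

lemma utilityT_eq {u F : ℝ → ℝ} (hu : IsUF u) (hF : F ∈ mSet) :
    ∃ μ : Measure ℝ, IsProbabilityMeasure μ ∧ (∀ a, μ.real (Iic a) = F a) ∧
      ∀ x, utilityT u F x = ProbabilityTheory.cdf (μ.map u) x := by
  have h : Monotone F ∧ ∀ x, ContinuousWithinAt F (Set.Ici x) x := ⟨hF.1, hF.2.1⟩
  have hbot : Tendsto F atBot (𝓝 0) := by
    obtain ⟨a, ha⟩ := hF.2.2.1
    refine tendsto_const_nhds.congr' ?_
    filter_upwards [eventually_le_atBot a] with x hx using (ha x hx).symm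
  have htop : Tendsto F atTop (𝓝 1) := by
    obtain ⟨b, hb⟩ := hF.2.2.2
    refine tendsto_const_nhds.congr' ?_
    filter_upwards [eventually_ge_atTop b] with x hx using (hb x hx).symm
  let f : StieltjesFunction ℝ := ⟨F, h.1, h.2⟩
  have hp : IsProbabilityMeasure f.measure := f.isProbabilityMeasure hbot htop
  refine ⟨f.measure, hp, fun a => ?_, fun x => ?_⟩
  · rw [measureReal_def, f.measure_Iic (l := 0) hbot, sub_zero,
      ENNReal.toReal_ofReal (mSet_nonneg hF a)]
  · have : IsProbabilityMeasure (f.measure.map u) :=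
      Measure.isProbabilityMeasure_map hu.2.measurable.aemeasurable
    rw [ProbabilityTheory.cdf_eq_real, utilityT, dif_pos h]
    rfl

lemma isPush_utilityT {u F : ℝ → ℝ} (hu : IsUF u) (hF : F ∈ mSet) :
    IsPush u F (utilityT u F) := by
  obtain ⟨μ, hμ, hμF, hcdf⟩ := utilityT_eq hu hF
  have hp : IsProbabilityMeasure (μ.map u) :=
    Measure.isProbabilityMeasure_map hu.2.measurable.aemeasurable
  intro a x
  rw [hcdf, ProbabilityTheory.cdf_eq_real,
    map_measureReal_apply hu.2.measurable measurableSet_Iic, ← hμF]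
  refine ⟨fun h => measureReal_mono fun b hb => ?_, fun h => measureReal_mono fun b hb => ?_⟩
  · exact (hu.1 hb).trans h
  · by_contra hab
    exact absurd (hb : u b ≤ x) (not_le.2 (h.trans_le (hu.1 (not_le.1 hab).le)))

lemma utilityT_mem {u F : ℝ → ℝ} (hu : IsUF u) (hF : F ∈ mSet) : utilityT u F ∈ mSet := by
  obtain ⟨μ, hμ, hμF, hcdf⟩ := utilityT_eq hu hF
  have hP := isPush_utilityT hu hF
  have he : utilityT u F = ProbabilityTheory.cdf (μ.map u) := funext hcdf
  refine ⟨?_, ?_, ?_, ?_⟩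
  · rw [he]; exact ProbabilityTheory.monotone_cdf _
  · rw [he]; exact fun x => (ProbabilityTheory.cdf (μ.map u)).right_continuous x
  · obtain ⟨a, ha⟩ := hF.2.2.1
    refine ⟨u a - 1, fun x hx => le_antisymm ?_ ?_⟩
    · rw [← ha a le_rfl]; exact (hP a x).2 (by linarith)
    · rw [hcdf]; exact ProbabilityTheory.cdf_nonneg _ _
  · obtain ⟨b, hb⟩ := hF.2.2.2
    refine ⟨u b, fun x hx => le_antisymm ?_ ?_⟩
    · rw [hcdf]; exact ProbabilityTheory.cdf_le_one _ _
    · rw [← hb b le_rfl]; exact (hP b x).1 hx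

/-! ### Calculus of utility transforms -/

lemma IsUF.comp {u v : ℝ → ℝ} (hu : IsUF u) (hv : IsUF v) : IsUF (u ∘ v) :=
  ⟨hu.1.comp hv.1, hu.2.comp hv.2⟩

/-- For a utility function, `{u ≤ x}` is empty, everything, or `Iic a` for some `a`. -/
lemma IsUF.sublevel {u : ℝ → ℝ} (hu : IsUF u) (x : ℝ) :
    (∀ a, x < u a) ∨ (∀ a, u a ≤ x) ∨ ∃ a, u a ≤ x ∧ ∀ b, a < b → x < u b := by
  by_cases h1 : ∀ a, x < u a
  · exact Or.inl h1
  by_cases h2 : ∀ a, u a ≤ x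
  · exact Or.inr (Or.inl h2)
  push Not at h1 h2
  obtain ⟨p, hp⟩ := h1
  obtain ⟨q, hq⟩ := h2
  have hbdd : BddAbove {a | u a ≤ x} :=
    ⟨q, fun a ha => le_of_not_gt fun hqa =>
      absurd (hq.trans_le (hu.1 hqa.le)) (not_lt.2 ha)⟩
  have hcl : IsClosed {a | u a ≤ x} := isClosed_le hu.2 continuous_const
  exact Or.inr (Or.inr ⟨sSup {a | u a ≤ x}, hcl.csSup_mem ⟨p, hp⟩ hbdd,
    fun b hb => lt_of_not_ge fun h => absurd (le_csSup hbdd h) (not_le.2 hb)⟩)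

/-- Monotonicity of the pushforward; with `F = F'` it gives uniqueness. -/
lemma IsPush.mono {u F F' G G' : ℝ → ℝ} (hu : IsUF u) (hF : F ∈ mSet) (hF' : F' ∈ mSet)
    (hG : ∀ x, G x ≤ 1) (hG' : ∀ x, 0 ≤ G' x) (h : IsPush u F G) (h' : IsPush u F' G')
    (hle : ∀ x, F x ≤ F' x) (x : ℝ) : G x ≤ G' x := by
  rcases hu.sublevel x with hx | hx | ⟨a, ha, hb⟩
  · obtain ⟨a, ha⟩ := hF.2.2.1
    exact ((h a x).2 (hx a)).trans ((ha a le_rfl).le.trans (hG' x))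
  · obtain ⟨b, hb⟩ := hF'.2.2.2
    exact (hG x).trans ((hb b le_rfl).ge.trans ((h' b x).1 (hx b)))
  · have ht : Tendsto F' (𝓝[>] a) (𝓝 (F' a)) :=
      (hF'.2.1 a).mono_left (nhdsWithin_mono _ Ioi_subset_Ici_self)
    have : G x ≤ F' a := by
      refine ge_of_tendsto ht ?_
      filter_upwards [self_mem_nhdsWithin] with b hab
      exact ((h b x).2 (hb b hab)).trans (hle b)
    exact this.trans ((h' a x).1 ha)

lemma IsPush.eq_utilityT {u F G : ℝ → ℝ} (hu : IsUF u) (hF : F ∈ mSet) (hG : G ∈ mSet)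
    (h : IsPush u F G) : utilityT u F = G := by
  have hm := utilityT_mem hu hF
  have hP := isPush_utilityT hu hF
  exact funext fun x => le_antisymm
    (hP.mono hu hF hF (mSet_le_one hm) (mSet_nonneg hG) h (fun _ => le_rfl) x)
    (h.mono hu hF hF (mSet_le_one hG) (mSet_nonneg hm) hP (fun _ => le_rfl) x)

lemma utilityT_mono {u F G : ℝ → ℝ} (hu : IsUF u) (hF : F ∈ mSet) (hG : G ∈ mSet)
    (h : ∀ x, F x ≤ G x) (x : ℝ) : utilityT u F x ≤ utilityT u G x :=
  (isPush_utilityT hu hF).mono hu hF hG (mSet_le_one (utilityT_mem hu hF))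
    (mSet_nonneg (utilityT_mem hu hG)) (isPush_utilityT hu hG) h x

lemma utilityT_comp {u v F : ℝ → ℝ} (hu : IsUF u) (hv : IsUF v) (hF : F ∈ mSet) :
    utilityT u (utilityT v F) = utilityT (u ∘ v) F := by
  have hm := utilityT_mem hv hF
  have h1 := isPush_utilityT hv hF
  have h2 := isPush_utilityT hu hm
  refine (IsPush.eq_utilityT (hu.comp hv) hF (utilityT_mem hu hm) fun a x => ⟨fun h => ?_,
    fun h => ?_⟩).symm
  · exact ((h1 a _).1 le_rfl).trans ((h2 _ x).1 h)
  · -- continuity of `u` leaves room for a point strictly below `v a` where `u` still exceeds `x`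
    have hev : ∀ᶠ b in 𝓝[<] (v a), x < u b :=
      (hu.2.continuousAt.eventually (lt_mem_nhds h)).filter_mono nhdsWithin_le_nhds
    obtain ⟨b, hxb, hb⟩ := (hev.and self_mem_nhdsWithin).exists
    exact ((h2 b x).2 hxb).trans ((h1 a b).2 hb)

lemma utilityT_id {F : ℝ → ℝ} (hF : F ∈ mSet) : utilityT id F = F :=
  IsPush.eq_utilityT ⟨monotone_id, continuous_id⟩ hF hF fun _ _ =>
    ⟨fun h => hF.1 h, fun h => hF.1 h.le⟩

/-! ### Point masses and two-point distributions -/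

/-- The cdf of the point mass at `c`. -/
def dirac (c : ℝ) : ℝ → ℝ := (Ici c).indicator 1

lemma dirac_of_le {c x : ℝ} (h : c ≤ x) : dirac c x = 1 := indicator_of_mem h _

lemma dirac_of_lt {c x : ℝ} (h : x < c) : dirac c x = 0 := indicator_of_notMem (not_le.2 h) _

/-- The cdf of the distribution with mass `p` at `0` and mass `1 - p` at `1`. -/
def twoPoint (p : ℝ) : ℝ → ℝ := fun x => if x < 0 then 0 else if x < 1 then p else 1

lemma dirac_mem (c : ℝ) : dirac c ∈ mSet := by
  refine ⟨fun x y hxy => ?_, fun x => ?_, ⟨c - 1, fun x hx => dirac_of_lt (by linarith)⟩,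
    ⟨c, fun x hx => dirac_of_le hx⟩⟩
  · rcases lt_or_ge x c with h | h
    · rw [dirac_of_lt h]; exact indicator_nonneg (fun _ _ => zero_le_one) _
    · rw [dirac_of_le h, dirac_of_le (h.trans hxy)]
  · rcases lt_or_ge x c with h | h
    · refine (continuousAt_const.congr (f := fun _ => (0:ℝ)) ?_).continuousWithinAt
      filter_upwards [gt_mem_nhds h] with y hy using (dirac_of_lt hy).symm
    · exact continuousWithinAt_const.congr (x := x) (f := fun _ => (1:ℝ))
        (fun y hy => dirac_of_le (h.trans hy)) (dirac_of_le h)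

lemma dirac_le_iff {c c' : ℝ} : (∀ x, dirac c' x ≤ dirac c x) ↔ c ≤ c' := by
  refine ⟨fun h => le_of_not_gt fun hc => ?_, fun h x => ?_⟩
  · have := h c'
    rw [dirac_of_le le_rfl, dirac_of_lt hc] at this
    linarith
  · rcases lt_or_ge x c' with hx | hx
    · rw [dirac_of_lt hx]; exact mSet_nonneg (dirac_mem c) x
    · rw [dirac_of_le (h.trans hx)]; exact mSet_le_one (dirac_mem c') x

lemma dirac_injective : Function.Injective dirac := fun c c' h =>
  le_antisymm (dirac_le_iff.1 fun x => by rw [h]) (dirac_le_iff.1 fun x => by rw [h])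

lemma utilityT_dirac {u : ℝ → ℝ} (hu : IsUF u) (c : ℝ) :
    utilityT u (dirac c) = dirac (u c) := by
  refine IsPush.eq_utilityT hu (dirac_mem c) (dirac_mem _) fun a x => ⟨fun h => ?_, fun h => ?_⟩
  · rcases lt_or_ge a c with hc | hc
    · rw [dirac_of_lt hc]; exact mSet_nonneg (dirac_mem _) x
    · rw [dirac_of_le ((hu.1 hc).trans h)]; exact mSet_le_one (dirac_mem _) a
  · rcases lt_or_ge a c with hc | hc
    · rw [dirac_of_lt (h.trans_le (hu.1 hc.le))]; exact mSet_nonneg (dirac_mem _) a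
    · rw [dirac_of_le hc]; exact mSet_le_one (dirac_mem _) x

lemma isUF_const (c : ℝ) : IsUF fun _ => c := ⟨monotone_const, continuous_const⟩

lemma utilityT_const (c : ℝ) {F : ℝ → ℝ} (hF : F ∈ mSet) :
    utilityT (fun _ => c) F = dirac c := by
  refine IsPush.eq_utilityT (isUF_const c) hF (dirac_mem _) fun a x => ⟨fun h => ?_, fun h => ?_⟩
  · rw [dirac_of_le h]; exact mSet_le_one hF a
  · rw [dirac_of_lt h]; exact mSet_nonneg hF a

lemma twoPoint_mem {p : ℝ} (h0 : 0 ≤ p) (h1 : p ≤ 1) : twoPoint p ∈ mSet := by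
  have he : twoPoint p = fun x => p * dirac 0 x + (1 - p) * dirac 1 x := by
    ext x
    unfold twoPoint
    split_ifs with hx hx'
    · rw [dirac_of_lt hx, dirac_of_lt (by linarith)]; ring
    · rw [dirac_of_le (not_lt.1 hx), dirac_of_lt hx']; ring
    · rw [dirac_of_le (not_lt.1 hx), dirac_of_le (not_lt.1 hx')]; ring
  refine ⟨?_, fun x => ?_, ⟨-1, fun x hx => ?_⟩, ⟨1, fun x hx => ?_⟩⟩
  · rw [he]
    exact ((dirac_mem 0).1.const_mul h0).add ((dirac_mem 1).1.const_mul (by linarith))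
  · rw [he]
    exact (continuousWithinAt_const.mul ((dirac_mem 0).2.1 x)).add
      (continuousWithinAt_const.mul ((dirac_mem 1).2.1 x))
  · exact if_pos (by linarith)
  · simp only [twoPoint]
    rw [if_neg (by linarith), if_neg (by linarith)]

lemma twoPoint_zero : twoPoint 0 = dirac 1 := by
  ext x
  unfold twoPoint
  split_ifs with hx hx'
  · rw [dirac_of_lt (by linarith)]
  · rw [dirac_of_lt hx']
  · rw [dirac_of_le (not_lt.1 hx')]

lemma twoPoint_one : twoPoint 1 = dirac 0 := by
  ext x
  unfold twoPoint
  split_ifs with hx hx'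
  · rw [dirac_of_lt hx]
  · rw [dirac_of_le (not_lt.1 hx)]
  · rw [dirac_of_le (not_lt.1 hx)]

/-! ### Distortions -/

lemma monotone_distort {d F : ℝ → ℝ} (hd : IsDF d) (hF : F ∈ mSet) : Monotone (d ∘ F) :=
  fun x y hxy => hd.1 ⟨mSet_nonneg hF x, mSet_le_one hF x⟩ ⟨mSet_nonneg hF y, mSet_le_one hF y⟩
    (hF.1 hxy)

lemma le_distortT {d F : ℝ → ℝ} (hd : IsDF d) (hF : F ∈ mSet) {x c : ℝ}
    (h : ∀ y, x < y → c ≤ d (F y)) : c ≤ distortT d F x := by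
  refine ge_of_tendsto ((monotone_distort hd hF).tendsto_rightLim x) ?_
  filter_upwards [self_mem_nhdsWithin] with y hy using h y hy

lemma distortT_le {d F : ℝ → ℝ} (hd : IsDF d) (hF : F ∈ mSet) {x y : ℝ} (h : x < y) :
    distortT d F x ≤ d (F y) := (monotone_distort hd hF).rightLim_le h

/-- Distortions commute with utility transforms, in the form: the distortion of `T^u F` is the
pushforward under `u` of the distortion of `F`. -/
lemma isPush_distortT {d u F : ℝ → ℝ} (hd : IsDF d) (hu : IsUF u) (hF : F ∈ mSet) :
    IsPush u (distortT d F) (distortT d (utilityT u F)) := by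
  have hm := utilityT_mem hu hF
  have hP := isPush_utilityT hu hF
  have hdm : ∀ {G H : ℝ → ℝ} {a b : ℝ}, G ∈ mSet → H ∈ mSet → G a ≤ H b → d (G a) ≤ d (H b) :=
    fun hG hH h => hd.1 ⟨mSet_nonneg hG _, mSet_le_one hG _⟩
      ⟨mSet_nonneg hH _, mSet_le_one hH _⟩ h
  refine fun a x => ⟨fun h => le_distortT hd hm fun y hy => ?_,
    fun h => le_distortT hd hF fun b hb => ?_⟩
  · have hev : ∀ᶠ b in 𝓝[>] a, u b < y :=
      (hu.2.continuousAt.eventually (gt_mem_nhds (h.trans_lt hy))).filter_mono nhdsWithin_le_nhds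
    obtain ⟨b, hby, hb⟩ := (hev.and self_mem_nhdsWithin).exists
    exact (distortT_le hd hF hb).trans (hdm hF hm ((hP b y).1 hby.le))
  · obtain ⟨y, hxy, hy⟩ := exists_between h
    exact (distortT_le hd hm hxy).trans
      (hdm hm hF ((hP b y).2 (hy.trans_le (hu.1 hb.le))))

/-- A monotone transform that commutes with every utility transform and fixes point masses is the
distortion whose value at `p` is read off the image of the two-point distribution at level `p`.
The comparison uses the utility function that is `0` up to `x`, `1` from `y` on, and linear in
between. -/
lemma eq_distortT (S : (ℝ → ℝ) → ℝ → ℝ) (hS : ∀ F ∈ mSet, S F ∈ mSet)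
    (hmono : ∀ F ∈ mSet, ∀ G ∈ mSet, (∀ x, G x ≤ F x) → ∀ x, S G x ≤ S F x)
    (hcomm : ∀ u, IsUF u → ∀ F ∈ mSet, utilityT u (S F) = S (utilityT u F))
    (hdirac : ∀ c, S (dirac c) = dirac c) :
    ∃ d, IsDF d ∧ ∀ F ∈ mSet, S F = distortT d F := by
  have hd : IsDF fun p => S (twoPoint p) (1 / 2) := by
    refine ⟨fun p hp q hq hpq => hmono _ (twoPoint_mem hq.1 hq.2) _ (twoPoint_mem hp.1 hp.2)
      (fun x => ?_) _, ?_, ?_⟩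
    · unfold twoPoint
      split_ifs <;> simp [hpq]
    · simp only [twoPoint_zero, hdirac]
      exact dirac_of_lt (by norm_num)
    · simp only [twoPoint_one, hdirac]
      exact dirac_of_le (by norm_num)
  refine ⟨_, hd, fun F hF => ?_⟩
  have key : ∀ x y, x < y → S F x ≤ S (twoPoint (F y)) (1 / 2) ∧
      S (twoPoint (F x)) (1 / 2) ≤ S F y := by
    intro x y hxy
    have hpos : 0 < y - x := sub_pos.2 hxy
    let u : ℝ → ℝ := fun z => max 0 (min 1 ((z - x) / (y - x)))
    have hu : IsUF u := by
      refine ⟨fun a b hab => ?_, by fun_prop⟩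
      have : (a - x) / (y - x) ≤ (b - x) / (y - x) := by gcongr
      exact max_le_max le_rfl (min_le_min le_rfl this)
    have hux : u x = 0 := by simp [u]
    have huy : u y = 1 := by simp [u, div_self hpos.ne']
    have hm := utilityT_mem hu hF
    have hP := isPush_utilityT hu hF
    have hQ := isPush_utilityT hu (hS F hF)
    rw [hcomm u hu F hF] at hQ
    have hbelow : ∀ z < 0, utilityT u F z = 0 := by
      intro z hz
      obtain ⟨a, ha⟩ := hF.2.2.1
      exact le_antisymm (((hP a z).2 (hz.trans_le (le_max_left _ _))).trans (ha a le_rfl).le)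
        (mSet_nonneg hm z)
    have habove : ∀ z, 1 ≤ z → utilityT u F z = 1 := by
      intro z hz
      obtain ⟨b, hb⟩ := hF.2.2.2
      exact le_antisymm (mSet_le_one hm z) ((hb b le_rfl).ge.trans
        ((hP b z).1 ((max_le zero_le_one (min_le_left _ _)).trans hz)))
    have hFx := twoPoint_mem (mSet_nonneg hF x) (mSet_le_one hF x)
    have hFy := twoPoint_mem (mSet_nonneg hF y) (mSet_le_one hF y)
    constructor
    · refine ((hQ x (1 / 2)).1 (by rw [hux]; norm_num)).trans (hmono _ hFy _ hm (fun z => ?_) _)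
      unfold twoPoint
      split_ifs with h0 h1
      · exact (hbelow z h0).le
      · exact (hP y z).2 (by rwa [huy])
      · exact mSet_le_one hm z
    · refine le_trans (hmono _ hm _ hFx (fun z => ?_) _)
        ((hQ y (1 / 2)).2 (by rw [huy]; norm_num))
      unfold twoPoint
      split_ifs with h0 h1
      · exact mSet_nonneg hm z
      · exact (hP x z).1 (by rw [hux]; exact not_lt.1 h0)
      · exact (habove z (not_lt.1 h1)).ge
  ext x
  refine le_antisymm (le_distortT hd hF fun y hy => (key x y hy).1) ?_
  have ht : Tendsto (S F) (𝓝[>] x) (𝓝 (S F x)) :=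
    ((hS F hF).2.1 x).mono_left (nhdsWithin_mono _ Ioi_subset_Ici_self)
  refine ge_of_tendsto ht ?_
  filter_upwards [self_mem_nhdsWithin] with y hy
  obtain ⟨w, hxw, hwy⟩ := exists_between (show x < y from hy)
  exact (distortT_le hd hF hxw).trans (key w y hwy).2

/-! ### Transforms commuting with the set of utility transforms -/

/-- Commutation with constant utilities makes `T` act on point masses by an increasing bijection
`e`, and then the utility `u'` matched with `u` has to be `e ∘ u ∘ e⁻¹`. -/
lemma exists_orderIso (T : (ℝ → ℝ) → ℝ → ℝ) (hT : ∀ F ∈ mSet, T F ∈ mSet)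
    (hmono : ∀ F ∈ mSet, ∀ G ∈ mSet, (∀ x, G x ≤ F x) → ∀ x, T G x ≤ T F x)
    (h1 : ∀ u : ℝ → ℝ, IsUF u → ∃ u' : ℝ → ℝ, IsUF u' ∧
        ∀ F ∈ mSet, utilityT u' (T F) = T (utilityT u F))
    (h2 : ∀ u' : ℝ → ℝ, IsUF u' → ∃ u : ℝ → ℝ, IsUF u ∧
        ∀ F ∈ mSet, utilityT u' (T F) = T (utilityT u F)) :
    ∃ e : ℝ ≃o ℝ, (∀ c, T (dirac c) = dirac (e c)) ∧
      ∀ u, IsUF u → ∀ F ∈ mSet, utilityT (e ∘ u ∘ e.symm) (T F) = T (utilityT u F) := by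
  have hrange : ∀ c, ∃ b, T (dirac b) = dirac c := by
    intro c
    obtain ⟨u, hu, h⟩ := h2 _ (isUF_const c)
    refine ⟨u 0, ?_⟩
    rw [← utilityT_dirac hu, ← h _ (dirac_mem 0), utilityT_const _ (hT _ (dirac_mem 0))]
  have hdirac : ∀ c, ∃ b, T (dirac c) = dirac b := by
    intro c
    obtain ⟨u', hu', h⟩ := h1 _ (isUF_const c)
    obtain ⟨b, hb⟩ := hrange 0
    refine ⟨u' 0, ?_⟩
    rw [← utilityT_dirac hu', ← hb, h _ (dirac_mem b), utilityT_const _ (dirac_mem b)]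
  choose v hv using hdirac
  have hvmono : Monotone v := fun a b hab => dirac_le_iff.1 fun x => by
    rw [← hv, ← hv]
    exact hmono _ (dirac_mem a) _ (dirac_mem b) (dirac_le_iff.2 hab) x
  have hvsurj : Function.Surjective v := fun c => by
    obtain ⟨b, hb⟩ := hrange c
    exact ⟨b, dirac_injective (by rw [← hv, hb])⟩
  have hconj : ∀ u u', IsUF u → IsUF u' →
      (∀ F ∈ mSet, utilityT u' (T F) = T (utilityT u F)) → ∀ c, u' (v c) = v (u c) := by
    intro u u' hu hu' h c
    apply dirac_injective
    rw [← utilityT_dirac hu', ← hv, h _ (dirac_mem c), utilityT_dirac hu, hv]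
  have hvinj : Function.Injective v := by
    suffices ∀ a b, a < b → v a ≠ v b by
      intro a b hab
      by_contra hne
      rcases lt_or_gt_of_ne hne with h | h
      · exact this a b h hab
      · exact this b a h hab.symm
    intro a b hab he
    obtain ⟨p, hp⟩ := hvsurj 0
    obtain ⟨q, hq⟩ := hvsurj 1
    have hpq : p ≤ q := by
      by_contra hlt
      have := hvmono (not_le.1 hlt).le
      linarith
    have hpos : 0 < b - a := sub_pos.2 hab
    -- the affine utility sending `a, b` to points `p, q` that `v` separates
    have hu : IsUF fun x => p + (q - p) * ((x - a) / (b - a)) := by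
      refine ⟨fun x y hxy => ?_, by fun_prop⟩
      have : 0 ≤ q - p := sub_nonneg.2 hpq
      dsimp only
      gcongr
    obtain ⟨u', hu', h⟩ := h1 _ hu
    have ha := hconj _ _ hu hu' h a
    have hb := hconj _ _ hu hu' h b
    simp only [sub_self, zero_div, mul_zero, add_zero, hp] at ha
    rw [div_self hpos.ne', mul_one, add_sub_cancel, hq, ← he, ha] at hb
    exact zero_ne_one hb
  let e : ℝ ≃o ℝ := (hvmono.strictMono_of_injective hvinj).orderIsoOfSurjective v hvsurj
  have hev : ∀ c, e c = v c := fun c => rfl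
  refine ⟨e, fun c => hv c, fun u hu F hF => ?_⟩
  obtain ⟨u', hu', h⟩ := h1 u hu
  have : e ∘ u ∘ e.symm = u' := by
    ext c
    have := hconj u u' hu hu' h (e.symm c)
    rw [← hev, ← hev, e.apply_symm_apply] at this
    exact this.symm
  rw [this, h F hF]

lemma isUF_orderIso (e : ℝ ≃o ℝ) : IsUF e := ⟨e.monotone, e.continuous⟩

/-- A monotone map `T : M → M` commutes with the set `𝒰` of all utility
transforms (`𝒰 ∘ T = T ∘ 𝒰` as sets of maps `M → M`) if and only if
`T = T_d ∘ T^u` for some distortion function `d` and some strictly increasing,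
continuous, surjective `u : ℝ → ℝ`. -/
theorem stmt3 (T : (ℝ → ℝ) → ℝ → ℝ) (hT : ∀ F ∈ mSet, T F ∈ mSet)
    (hmono : ∀ F ∈ mSet, ∀ G ∈ mSet, (∀ x, G x ≤ F x) → ∀ x, T G x ≤ T F x) :
    ((∀ u : ℝ → ℝ, IsUF u → ∃ u' : ℝ → ℝ, IsUF u' ∧
        ∀ F ∈ mSet, utilityT u' (T F) = T (utilityT u F)) ∧
      (∀ u' : ℝ → ℝ, IsUF u' → ∃ u : ℝ → ℝ, IsUF u ∧
        ∀ F ∈ mSet, utilityT u' (T F) = T (utilityT u F))) ↔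
      ∃ d u : ℝ → ℝ, IsDF d ∧ StrictMono u ∧ Continuous u ∧ Function.Surjective u ∧
        ∀ F ∈ mSet, T F = distortT d (utilityT u F) := by
  constructor
  · rintro ⟨h1, h2⟩
    obtain ⟨e, hed, hec⟩ := exists_orderIso T hT hmono h1 h2
    have he := isUF_orderIso e
    have hs := isUF_orderIso e.symm
    obtain ⟨d, hd, hS⟩ := eq_distortT (fun F => T (utilityT e.symm F))
      (fun F hF => hT _ (utilityT_mem hs hF))
      (fun F hF G hG h => hmono _ (utilityT_mem hs hF) _ (utilityT_mem hs hG)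
        (utilityT_mono hs hG hF h))
      (fun w hw F hF => by
        have hu : IsUF (e.symm ∘ w ∘ e) := hs.comp (hw.comp he)
        have hwe : e ∘ (e.symm ∘ w ∘ e) ∘ e.symm = w := by ext x; simp
        have hwe' : (e.symm ∘ w ∘ e) ∘ e.symm = e.symm ∘ w := by ext x; simp
        have := hec _ hu _ (utilityT_mem hs hF)
        rw [hwe, utilityT_comp hu hs hF, hwe'] at this
        rw [this, utilityT_comp hs hw hF])
      (fun c => by rw [utilityT_dirac hs, hed, e.apply_symm_apply])
    refine ⟨d, e, hd, e.strictMono, e.continuous, e.surjective, fun F hF => ?_⟩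
    have hid : e.symm ∘ e = id := by ext x; simp
    rw [← hS _ (utilityT_mem he hF), utilityT_comp hs he hF, hid, utilityT_id hF]
  · rintro ⟨d, v, hd, hvs, hvc, hvsurj, hTd⟩
    let e : ℝ ≃o ℝ := hvs.orderIsoOfSurjective v hvsurj
    have hs := isUF_orderIso e.symm
    have hv : IsUF v := ⟨hvs.monotone, hvc⟩
    have hev : ∀ x, v (e.symm x) = x := fun x => e.apply_symm_apply x
    have hve : ∀ x, e.symm (v x) = x := fun x => e.symm_apply_apply x
    have key : ∀ u u' : ℝ → ℝ, IsUF u → IsUF u' → u' ∘ v = v ∘ u →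
        ∀ F ∈ mSet, utilityT u' (T F) = T (utilityT u F) := by
      intro u u' hu hu' h F hF
      have hm := utilityT_mem hu hF
      refine IsPush.eq_utilityT hu' (hT F hF) (hT _ hm) ?_
      rw [hTd F hF, hTd _ hm, utilityT_comp hv hu hF, ← h, ← utilityT_comp hu' hv hF]
      exact isPush_distortT hd hu' (utilityT_mem hv hF)
    refine ⟨fun u hu => ?_, fun u' hu' => ?_⟩
    · have hu' : IsUF (v ∘ u ∘ e.symm) := hv.comp (hu.comp hs)
      exact ⟨_, hu', key _ _ hu hu' (by ext x; simp [hve])⟩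
    · have hu : IsUF (e.symm ∘ u' ∘ v) := hs.comp (hu'.comp hv)
      exact ⟨_, hu, key _ _ hu hu' (by ext x; simp [hev])⟩
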